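/- arXiv:0906.2437 — 2 statements merged into one kernel-verified Lean document; each statement's English description precedes it below -/
import Mathlib

section
/- Let k be a field of characteristic 0 and v ∈ ℕⁿ. The k-vector space R_v of SL₂(k)-invariants of multidegree v is spanned by the graph monomials m_Γ, where Γ ranges over the directed graphs on {1,…,n} whose valence vector equals v. -/
/-!
This is the argument of Gordan and Capelli. Let `E_{ij} = ∑_a X(a,i) ∂_{(a,j)}` give the
infinitesimal action of `gl₂`, and let `Ω_{ab} = ∂_{x_a} ∂_{y_b} - ∂_{x_b} ∂_{y_a}` be Cayley's
operators. An invariant `f` is killed by `E_{01}` and `E_{10}`, hence also by their commutator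
`E_{00} - E_{11}`. For `f` homogeneous of degree `m`, Capelli's identity

  `∑_{a,b} [ab] Ω_{ab} = 2 (E_{00} E_{11} - E_{10} E_{01} + E_{11})`

and Euler's formula `E_{00} f + E_{11} f = m f` then give `2 ∑_{a,b} [ab] Ω_{ab} f = m (m + 2) f`.
The operators `Ω_{ab}` commute with `E_{01}` and with `E_{00} - E_{11}` and lower the degree by two,
so induction on `m` writes `f` as a polynomial in the brackets. Only the graph monomials of the
right multidegree contribute.
-/

open MvPolynomial

/-- The polynomial ring `A = k[x_1, y_1, …, x_n, y_n]`: variable `(i, 0)` is `x_i`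
and `(i, 1)` is `y_i`. -/
abbrev PtRing (k : Type) [CommRing k] (n : ℕ) := MvPolynomial (Fin n × Fin 2) k

/-- The bracket `[ab] = x_a y_b − x_b y_a`. -/
noncomputable def bracket (k : Type) [CommRing k] (n : ℕ) (a b : Fin n) : PtRing k n :=
  X (a, 0) * X (b, 1) - X (b, 0) * X (a, 1)

/-- The graph monomial `m_Γ = ∏_{(a,b) ∈ Γ} [ab]` of a directed graph `Γ`,
viewed as a multiset of directed edges. -/
noncomputable def graphMonomial (k : Type) [CommRing k] (n : ℕ)
    (Γ : Multiset (Fin n × Fin n)) : PtRing k n :=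
  (Γ.map fun e => bracket k n e.1 e.2).prod

/-- The `k`-algebra endomorphism of `A` induced by a `2×2` matrix `g = ((p,q),(r,s))`:
`x_i ↦ p·x_i + r·y_i` and `y_i ↦ q·x_i + s·y_i`. -/
noncomputable def subst (k : Type) [CommRing k] (n : ℕ) (g : Matrix (Fin 2) (Fin 2) k) :
    PtRing k n →ₐ[k] PtRing k n :=
  aeval fun p =>
    if p.2 = 0 then C (g 0 0) * X (p.1, 0) + C (g 1 0) * X (p.1, 1)
    else C (g 0 1) * X (p.1, 0) + C (g 1 1) * X (p.1, 1)

/-- The valence vector of a directed graph: the `i`-th entry is the number of edges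
(with multiplicity) having `i` as an endpoint. -/
def valence (n : ℕ) (Γ : Multiset (Fin n × Fin n)) : Fin n → ℕ :=
  fun i => (Γ.map Prod.fst).count i + (Γ.map Prod.snd).count i

/-- `R_v`: the space of `SL₂(k)`-invariant multihomogeneous polynomials of multidegree `v`. -/
noncomputable def Rv (k : Type) [CommRing k] (n : ℕ) (v : Fin n → ℕ) :
    Submodule k (PtRing k n) :=
  (⨅ g : Matrix.SpecialLinearGroup (Fin 2) k,
      LinearMap.ker ((subst k n (g : Matrix (Fin 2) (Fin 2) k)).toLinearMap
        - (LinearMap.id : PtRing k n →ₗ[k] PtRing k n))) ⊓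
  weightedHomogeneousSubmodule k (fun p : Fin n × Fin 2 => Finsupp.single p.1 1)
    (Finsupp.equivFunOnFinite.symm v)

lemma isUnit_natCast_of_ne_zero {A : Type*} [Ring A] [Algebra ℚ A] {N : ℕ} (hN : N ≠ 0) :
    IsUnit (N : A) := by
  simpa using (IsUnit.mk0 (N : ℚ) (Nat.cast_ne_zero.2 hN)).map (algebraMap ℚ A)

section Derivation

variable {R σ : Type*} [CommRing R]

lemma polynomial_eq_zero_of_forall_eval_natCast_eq_zero [IsAddTorsionFree R] {p : Polynomial R}
    (h : ∀ t : ℕ, p.eval (t : R) = 0) : p = 0 := by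
  have hdiff : p.leadingCoeff * (p.natDegree.factorial : R) = 0 := by
    have := congrFun p.fwdDiff_iter_degree_eq_factorial 0
    simpa [fwdDiff_iter_eq_sum_shift, h] using this.symm
  rw [mul_comm, ← nsmul_eq_mul, smul_eq_zero] at hdiff
  exact Polynomial.leadingCoeff_eq_zero.1 (hdiff.resolve_left p.natDegree.factorial_ne_zero)

/-- The substitution `X p ↦ X p + T D(X p)`, with a formal parameter `T`. It agrees with the flow
`exp (T D)` modulo `T²`, which is all that is needed to recover `D`. -/
noncomputable def linearFlow (D : Derivation R (MvPolynomial σ R) (MvPolynomial σ R)) :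
    MvPolynomial σ R →ₐ[R] Polynomial (MvPolynomial σ R) :=
  aeval fun p => Polynomial.C (X p) + Polynomial.X * Polynomial.C (D (X p))

variable {D : Derivation R (MvPolynomial σ R) (MvPolynomial σ R)}

lemma linearFlow_X (p : σ) :
    linearFlow D (X p) = Polynomial.C (X p) + Polynomial.X * Polynomial.C (D (X p)) :=
  aeval_X _ p

lemma eval_linearFlow (g f : MvPolynomial σ R) :
    (linearFlow D f).eval g = aeval (fun p => X p + g * D (X p)) f := by
  induction f using MvPolynomial.induction_on with
  | C a => simp
  | add f₁ f₂ h₁ h₂ => simp [h₁, h₂]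
  | mul_X f p h => simp [h, linearFlow_X, -Polynomial.X_mul_C]

lemma eval_zero_linearFlow (f : MvPolynomial σ R) : (linearFlow D f).eval 0 = f := by
  simp [eval_linearFlow]

lemma eval_zero_derivative_linearFlow (f : MvPolynomial σ R) :
    (Polynomial.derivative (linearFlow D f)).eval 0 = D f := by
  induction f using MvPolynomial.induction_on with
  | C a => simp
  | add f₁ f₂ h₁ h₂ => simp [h₁, h₂]
  | mul_X f p h =>
    simp only [map_mul, linearFlow_X, Polynomial.derivative_mul, Polynomial.derivative_add,
      Polynomial.derivative_C, Polynomial.derivative_X, Polynomial.eval_add, Polynomial.eval_mul,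
      Polynomial.eval_C, Polynomial.eval_X, Polynomial.eval_zero, Polynomial.eval_one, h,
      eval_zero_linearFlow, Derivation.leibniz, smul_eq_mul]
    ring

instance instIsAddTorsionFreeMvPolynomial [IsAddTorsionFree R] :
    IsAddTorsionFree (MvPolynomial σ R) where
  nsmul_right_injective n hn f g hfg := by
    ext d
    refine IsAddTorsionFree.nsmul_right_injective hn ?_
    simpa only [coeff_smul] using congrArg (coeff d) hfg

lemma derivation_eq_zero_of_forall_aeval_eq [IsAddTorsionFree R] {f : MvPolynomial σ R}
    (hf : ∀ t : ℕ, aeval (fun p => X p + (t : MvPolynomial σ R) * D (X p)) f = f) : D f = 0 := by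
  have hconst : linearFlow D f - Polynomial.C f = 0 :=
    polynomial_eq_zero_of_forall_eval_natCast_eq_zero fun t => by
      rw [Polynomial.eval_sub, eval_linearFlow, hf, Polynomial.eval_C, sub_self]
  rw [← eval_zero_derivative_linearFlow, sub_eq_zero.1 hconst, Polynomial.derivative_C,
    Polynomial.eval_zero]

lemma derivation_sum_apply {α : Type*} (s : Finset α)
    (D : α → Derivation R (MvPolynomial σ R) (MvPolynomial σ R)) (f : MvPolynomial σ R) :
    (∑ i ∈ s, D i) f = ∑ i ∈ s, D i f := by
  rw [← Derivation.coeFnAddMonoidHom_apply, map_sum, Finset.sum_apply]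
  rfl

lemma derivation_commutator_apply {D₁ D₂ D₃ : Derivation R (MvPolynomial σ R) (MvPolynomial σ R)}
    (h : ∀ p, D₁ (D₂ (X p)) - D₂ (D₁ (X p)) = D₃ (X p)) (f : MvPolynomial σ R) :
    D₁ (D₂ f) - D₂ (D₁ f) = D₃ f :=
  DFunLike.congr_fun (derivation_ext h : ⁅D₁, D₂⁆ = D₃) f

lemma derivation_pderiv_X (D : Derivation R (MvPolynomial σ R) (MvPolynomial σ R)) (p q : σ) :
    D (pderiv p (X q)) = 0 := by
  classical
  rw [pderiv_X, Pi.single_apply, apply_ite D, Derivation.map_one_eq_zero, map_zero, ite_self]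

lemma pderiv_comm (p q : σ) (f : MvPolynomial σ R) :
    pderiv p (pderiv q f) = pderiv q (pderiv p f) :=
  sub_eq_zero.1 (derivation_commutator_apply (D₃ := 0) (by simp [derivation_pderiv_X]) f)

end Derivation

section Polarization

variable (R : Type*) {ι κ : Type*} [CommRing R]

/-- Cayley's operator `Ω_{ab} = ∂_{(a,i)} ∂_{(b,j)} - ∂_{(b,i)} ∂_{(a,j)}`, for the columns `i`, `j`
of an `ι × κ` matrix of variables. -/
noncomputable def cayleyOmega (i j : κ) (a b : ι) :
    MvPolynomial (ι × κ) R →ₗ[R] MvPolynomial (ι × κ) R :=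
  (pderiv (a, i)).toLinearMap ∘ₗ (pderiv (b, j)).toLinearMap -
    (pderiv (b, i)).toLinearMap ∘ₗ (pderiv (a, j)).toLinearMap

variable {R}

lemma cayleyOmega_apply (i j : κ) (a b : ι) (f : MvPolynomial (ι × κ) R) :
    cayleyOmega R i j a b f =
      pderiv (a, i) (pderiv (b, j) f) - pderiv (b, i) (pderiv (a, j) f) :=
  rfl

lemma isHomogeneous_cayleyOmega (i j : κ) (a b : ι) {f : MvPolynomial (ι × κ) R} {m : ℕ}
    (hf : f.IsHomogeneous m) : (cayleyOmega R i j a b f).IsHomogeneous (m - 2) :=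
  hf.pderiv.pderiv.sub hf.pderiv.pderiv

variable (R ι) [DecidableEq κ]

/-- The polarization operator `E_{ij} = ∑_a X(a,i) ∂_{(a,j)}`, defined by its values on the
variables so that `ι` may be infinite. It is the infinitesimal action of the matrix unit `(i, j)` on
polynomials in the entries of an `ι × κ` matrix. -/
noncomputable def polarization (i j : κ) :
    Derivation R (MvPolynomial (ι × κ) R) (MvPolynomial (ι × κ) R) :=
  mkDerivation R fun p => if p.2 = j then X (p.1, i) else 0

variable {R ι}

lemma polarization_X (i j l : κ) (a : ι) :
    polarization R ι i j (X (a, l)) = if l = j then X (a, i) else 0 :=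
  mkDerivation_X ..

lemma polarization_commutator (i j : κ) (f : MvPolynomial (ι × κ) R) :
    polarization R ι i j (polarization R ι j i f) - polarization R ι j i (polarization R ι i j f) =
      polarization R ι i i f - polarization R ι j j f := by
  refine derivation_commutator_apply (D₃ := polarization R ι i i - polarization R ι j j) ?_ f
  rintro ⟨a, l⟩
  by_cases hi : l = i <;> by_cases hj : l = j <;> simp_all [polarization_X]

lemma polarization_pderiv (i j l : κ) (a : ι) (f : MvPolynomial (ι × κ) R) :
    polarization R ι i j (pderiv (a, l) f) =
      pderiv (a, l) (polarization R ι i j f) - if l = i then pderiv (a, j) f else 0 := by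
  classical
  suffices h : pderiv (a, l) (polarization R ι i j f) - polarization R ι i j (pderiv (a, l) f) =
      (if l = i then pderiv (a, j) else 0 : Derivation R _ (MvPolynomial (ι × κ) R)) f by
    rw [eq_sub_iff_add_eq, ← eq_sub_iff_add_eq', h]
    split_ifs <;> rfl
  refine derivation_commutator_apply (fun ⟨b, m⟩ => ?_) f
  rw [derivation_pderiv_X, sub_zero, polarization_X]
  by_cases hm : m = j <;> by_cases hl : l = i <;> simp_all [pderiv_X, Pi.single_apply, eq_comm]

lemma polarization_cayleyOmega {i j : κ} (hij : i ≠ j) (a b : ι)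
    (f : MvPolynomial (ι × κ) R) :
    polarization R ι i j (cayleyOmega R i j a b f) =
      cayleyOmega R i j a b (polarization R ι i j f) := by
  simp [cayleyOmega_apply, polarization_pderiv, hij.symm, pderiv_comm (b, j) (a, j)]

lemma polarization_left_cayleyOmega {i j : κ} (hij : i ≠ j) (a b : ι)
    (f : MvPolynomial (ι × κ) R) :
    polarization R ι i i (cayleyOmega R i j a b f) =
      cayleyOmega R i j a b (polarization R ι i i f) - cayleyOmega R i j a b f := by
  simp only [cayleyOmega_apply, map_sub, polarization_pderiv, hij.symm, ↓reduceIte, sub_zero]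
  ring

lemma polarization_right_cayleyOmega {i j : κ} (hij : i ≠ j) (a b : ι)
    (f : MvPolynomial (ι × κ) R) :
    polarization R ι j j (cayleyOmega R i j a b f) =
      cayleyOmega R i j a b (polarization R ι j j f) - cayleyOmega R i j a b f := by
  simp only [cayleyOmega_apply, map_sub, polarization_pderiv, hij, ↓reduceIte, sub_zero]
  ring

lemma polarization_apply [Fintype ι] (i j : κ) (f : MvPolynomial (ι × κ) R) :
    polarization R ι i j f = ∑ a, X (a, i) * pderiv (a, j) f := by
  classical
  have h : polarization R ι i j = ∑ a, (X (a, i) : MvPolynomial (ι × κ) R) • pderiv (a, j) := by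
    ext ⟨b, l⟩ : 1
    simp [polarization_X, derivation_sum_apply, pderiv_X, Pi.single_apply, ite_and]
  simp [h, derivation_sum_apply]

lemma sum_polarization_self [Finite ι] [Fintype κ] {f : MvPolynomial (ι × κ) R} {m : ℕ}
    (hf : f.IsHomogeneous m) : ∑ i, polarization R ι i i f = m • f := by
  cases nonempty_fintype ι
  simp only [polarization_apply]
  rw [Finset.sum_comm, ← Fintype.sum_prod_type', hf.sum_X_mul_pderiv]

lemma polarization_polarization [Fintype ι] (i j k l : κ) (f : MvPolynomial (ι × κ) R) :
    polarization R ι i j (polarization R ι k l f) =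
      ∑ a, ∑ b, X (a, i) * X (b, k) * pderiv (a, j) (pderiv (b, l) f) +
        if k = j then polarization R ι i l f else 0 := by
  simp only [polarization_apply (f := f), map_sum, Derivation.leibniz, polarization_X, smul_eq_mul]
  simp only [polarization_apply, Finset.sum_add_distrib, Finset.mul_sum]
  rw [Finset.sum_comm]
  congr 1
  · exact Finset.sum_congr rfl fun a _ => Finset.sum_congr rfl fun b _ => by ring
  · split_ifs <;> simp [mul_comm]

lemma capelli_identity [Fintype ι] {i j : κ} (hij : i ≠ j) (f : MvPolynomial (ι × κ) R) :
    ∑ a : ι, ∑ b : ι, (X (a, i) * X (b, j) - X (b, i) * X (a, j)) * cayleyOmega R i j a b f =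
      2 * (polarization R ι i i (polarization R ι j j f) -
        polarization R ι j i (polarization R ι i j f) + polarization R ι j j f) := by
  let F a b := X (a, i) * X (b, j) * cayleyOmega R i j a b f
  have hF (a b) :
      (X (a, i) * X (b, j) - X (b, i) * X (a, j)) * cayleyOmega R i j a b f = F a b + F b a := by
    simp only [F, cayleyOmega_apply]
    ring
  have hji : polarization R ι j i (polarization R ι i j f) =
      ∑ a, ∑ b, X (b, j) * X (a, i) * pderiv (b, i) (pderiv (a, j) f) +
        polarization R ι j j f := by
    rw [polarization_polarization, if_pos rfl, Finset.sum_comm]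
  rw [hji, polarization_polarization i i, if_neg hij.symm, add_zero]
  simp only [hF, Finset.sum_add_distrib]
  rw [Finset.sum_comm (f := fun a b => F b a)]
  simp only [F, cayleyOmega_apply, mul_sub, Finset.sum_sub_distrib, mul_comm (X (_, j)) (X (_, i))]
  ring

end Polarization

section WeightedHomogeneous

variable {R σ M : Type*} [CommSemiring R] [AddCommMonoid M] {w : σ → M}

lemma isWeightedHomogeneous_comp {N : Type*} [AddCommMonoid N] (φ : M →+ N)
    {f : MvPolynomial σ R} {m : M} (hf : IsWeightedHomogeneous w f m) :
    IsWeightedHomogeneous (φ ∘ w) f (φ m) := by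
  intro d hd
  rw [← hf hd]
  simp [Finsupp.weight_apply, Finsupp.sum]

lemma mem_span_image_of_isWeightedHomogeneous {α : Type*} {s : Set α} {g : α → MvPolynomial σ R}
    {d : α → M} (hg : ∀ i ∈ s, IsWeightedHomogeneous w (g i) (d i)) {f : MvPolynomial σ R} {m : M}
    (hf : IsWeightedHomogeneous w f m) (hmem : f ∈ Submodule.span R (g '' s)) :
    f ∈ Submodule.span R (g '' {i ∈ s | d i = m}) := by
  suffices h : Submodule.span R (g '' s) ≤
      (Submodule.span R (g '' {i ∈ s | d i = m})).comap (weightedHomogeneousComponent w m) by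
    simpa only [Submodule.mem_comap, hf.weightedHomogeneousComponent_same] using h hmem
  rw [Submodule.span_le]
  rintro _ ⟨i, hi, rfl⟩
  rw [SetLike.mem_coe, Submodule.mem_comap]
  by_cases hd : d i = m
  · rw [← hd, (hg i hi).weightedHomogeneousComponent_same]
    exact Submodule.subset_span ⟨i, ⟨hi, rfl⟩, rfl⟩
  · rw [(hg i hi).weightedHomogeneousComponent_ne m (Ne.symm hd)]
    exact Submodule.zero_mem _

end WeightedHomogeneous

section GraphMonomial

variable {k : Type} [CommRing k] {n : ℕ}

/-- The weight `x_i, y_i ↦ e_i` of the `ℕⁿ`-grading by multidegree. -/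
noncomputable abbrev pointWeight (n : ℕ) : Fin n × Fin 2 → Fin n →₀ ℕ :=
  fun p => Finsupp.single p.1 1

lemma isHomogeneous_of_isWeightedHomogeneous_pointWeight {f : PtRing k n} {v : Fin n →₀ ℕ}
    (hf : IsWeightedHomogeneous (pointWeight n) f v) : f.IsHomogeneous v.degree := by
  have h := isWeightedHomogeneous_comp Finsupp.degree hf
  rwa [show Finsupp.degree ∘ pointWeight n = 1 from funext fun p => by simp] at h

lemma graphMonomial_zero : graphMonomial k n 0 = 1 := by
  simp [graphMonomial]

lemma graphMonomial_singleton (e : Fin n × Fin n) :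
    graphMonomial k n {e} = bracket k n e.1 e.2 := by
  simp [graphMonomial]

lemma graphMonomial_add (Γ Δ : Multiset (Fin n × Fin n)) :
    graphMonomial k n (Γ + Δ) = graphMonomial k n Γ * graphMonomial k n Δ := by
  simp [graphMonomial]

lemma isWeightedHomogeneous_bracket (a b : Fin n) :
    IsWeightedHomogeneous (pointWeight n) (bracket k n a b)
      (Finsupp.single a 1 + Finsupp.single b 1) := by
  refine ((isWeightedHomogeneous_X k _ (a, 0)).mul (isWeightedHomogeneous_X k _ (b, 1))).sub ?_
  rw [add_comm]
  exact (isWeightedHomogeneous_X k _ (b, 0)).mul (isWeightedHomogeneous_X k _ (a, 1))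

lemma equivFunOnFinite_symm_valence (Γ : Multiset (Fin n × Fin n)) :
    Finsupp.equivFunOnFinite.symm (valence n Γ) =
      (Γ.map fun e => Finsupp.single e.1 1 + Finsupp.single e.2 1).sum := by
  induction Γ using Multiset.induction_on with
  | empty => ext; simp [valence]
  | cons e Γ ih =>
    rw [Multiset.map_cons, Multiset.sum_cons, ← ih]
    ext i
    simp only [Finsupp.equivFunOnFinite_symm_apply_apply, Finsupp.coe_equivFunOnFinite_symm,
      Finsupp.coe_add, Pi.add_apply, Finsupp.single_apply, valence, Multiset.map_cons,
      Multiset.count_cons, eq_comm (a := i)]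
    ring

lemma isWeightedHomogeneous_graphMonomial (Γ : Multiset (Fin n × Fin n)) :
    IsWeightedHomogeneous (pointWeight n) (graphMonomial k n Γ)
      (Finsupp.equivFunOnFinite.symm (valence n Γ)) := by
  rw [equivFunOnFinite_symm_valence]
  induction Γ using Multiset.induction_on with
  | empty => simpa [graphMonomial] using isWeightedHomogeneous_one k _
  | cons e Γ ih => simpa [graphMonomial] using (isWeightedHomogeneous_bracket e.1 e.2).mul ih

variable (k n) in
/-- The bracket algebra: the subalgebra generated by the brackets `[ab]`. Requiring `a ≠ b` loses
nothing since `[aa] = 0`, and makes its products of generators the loopless graph monomials. -/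
noncomputable def bracketAlgebra : Subalgebra k (PtRing k n) :=
  Algebra.adjoin k {f | ∃ a b, a ≠ b ∧ bracket k n a b = f}

lemma bracket_mem_bracketAlgebra (a b : Fin n) : bracket k n a b ∈ bracketAlgebra k n := by
  rcases eq_or_ne a b with rfl | hab
  · simp [bracket]
  · exact Algebra.subset_adjoin ⟨a, b, hab, rfl⟩

lemma toSubmodule_bracketAlgebra_le_span :
    Subalgebra.toSubmodule (bracketAlgebra k n) ≤
      Submodule.span k (graphMonomial k n '' {Γ | ∀ e ∈ Γ, e.1 ≠ e.2}) := by
  rw [bracketAlgebra, Algebra.adjoin_eq_span]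
  refine Submodule.span_mono fun f hf => ?_
  induction hf using Submonoid.closure_induction with
  | mem f hf =>
    obtain ⟨a, b, hab, rfl⟩ := hf
    exact ⟨{(a, b)}, by simpa using hab, graphMonomial_singleton _⟩
  | one => exact ⟨0, by simp, graphMonomial_zero⟩
  | mul f g _ _ hf hg =>
    obtain ⟨Γ, hΓ, rfl⟩ := hf
    obtain ⟨Δ, hΔ, rfl⟩ := hg
    refine ⟨Γ + Δ, fun e he => ?_, graphMonomial_add Γ Δ⟩
    exact (Multiset.mem_add.1 he).elim (hΓ e) (hΔ e)

end GraphMonomial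

section Invariants

variable {k : Type} [CommRing k] {n : ℕ}

lemma mem_Rv {v : Fin n → ℕ} {f : PtRing k n} :
    f ∈ Rv k n v ↔
      (∀ g : Matrix.SpecialLinearGroup (Fin 2) k, subst k n g f = f) ∧
        IsWeightedHomogeneous (pointWeight n) f (Finsupp.equivFunOnFinite.symm v) := by
  simp [Rv, sub_eq_zero, mem_weightedHomogeneousSubmodule]

lemma subst_X (g : Matrix (Fin 2) (Fin 2) k) (p : Fin n × Fin 2) :
    subst k n g (X p) = C (g 0 p.2) * X (p.1, 0) + C (g 1 p.2) * X (p.1, 1) := by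
  obtain ⟨a, l⟩ := p
  fin_cases l <;> simp [subst]

lemma subst_bracket (g : Matrix (Fin 2) (Fin 2) k) (a b : Fin n) :
    subst k n g (bracket k n a b) = C g.det * bracket k n a b := by
  simp only [bracket, map_sub, map_mul, subst_X, Matrix.det_fin_two]
  ring

lemma subst_graphMonomial (g : Matrix.SpecialLinearGroup (Fin 2) k)
    (Γ : Multiset (Fin n × Fin n)) :
    subst k n g (graphMonomial k n Γ) = graphMonomial k n Γ := by
  simp [graphMonomial, map_multiset_prod, subst_bracket]

lemma graphMonomial_mem_Rv (Γ : Multiset (Fin n × Fin n)) :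
    graphMonomial k n Γ ∈ Rv k n (valence n Γ) :=
  mem_Rv.2 ⟨fun g => subst_graphMonomial g Γ, isWeightedHomogeneous_graphMonomial Γ⟩

lemma subst_transvection {i j : Fin 2} (hij : i ≠ j) (t : k) :
    subst k n (Matrix.SpecialLinearGroup.transvection hij t) =
      aeval fun p => X p + C t * polarization k (Fin n) i j (X p) := by
  ext1 ⟨a, l⟩
  rw [subst_X, aeval_X, polarization_X, Matrix.SpecialLinearGroup.transvection_coe]
  fin_cases i <;> fin_cases j <;> fin_cases l <;> simp_all [add_comm]

lemma polarization_eq_zero_of_invariant [IsAddTorsionFree k] {i j : Fin 2} (hij : i ≠ j)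
    {f : PtRing k n} (hf : ∀ g : Matrix.SpecialLinearGroup (Fin 2) k, subst k n g f = f) :
    polarization k (Fin n) i j f = 0 :=
  derivation_eq_zero_of_forall_aeval_eq fun t => by
    simpa only [subst_transvection, map_natCast] using
      hf (Matrix.SpecialLinearGroup.transvection hij (t : k))

lemma polarization_diag_eq_of_invariant [IsAddTorsionFree k] {f : PtRing k n}
    (hf : ∀ g : Matrix.SpecialLinearGroup (Fin 2) k, subst k n g f = f) :
    polarization k (Fin n) 0 0 f = polarization k (Fin n) 1 1 f := by
  have h := polarization_commutator 0 1 f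
  rw [polarization_eq_zero_of_invariant zero_ne_one hf,
    polarization_eq_zero_of_invariant one_ne_zero hf, map_zero, map_zero, sub_zero] at h
  exact sub_eq_zero.1 h.symm

lemma two_mul_sum_bracket_mul_cayleyOmega {f : PtRing k n} {m : ℕ} (hm : f.IsHomogeneous m)
    (h01 : polarization k (Fin n) 0 1 f = 0)
    (hdiag : polarization k (Fin n) 0 0 f = polarization k (Fin n) 1 1 f) :
    2 * ∑ a, ∑ b, bracket k n a b * cayleyOmega k 0 1 a b f = (m * (m + 2) : ℕ) • f := by
  have euler : 2 * polarization k (Fin n) 1 1 f = m * f := by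
    have h := sum_polarization_self hm
    rwa [Fin.sum_univ_two, hdiag, ← two_mul, nsmul_eq_mul] at h
  have euler' : 2 * polarization k (Fin n) 0 0 (polarization k (Fin n) 1 1 f) =
      m * polarization k (Fin n) 1 1 f := by
    simpa [two_mul, ← nsmul_eq_mul, hdiag] using congrArg (polarization k (Fin n) 0 0) euler
  simp only [bracket]
  rw [capelli_identity zero_ne_one, h01, map_zero, sub_zero, nsmul_eq_mul]
  push_cast
  linear_combination 2 * euler' + ((m : PtRing k n) + 2) * euler

lemma mem_bracketAlgebra_of_polarization [Algebra ℚ k] {f : PtRing k n} {m : ℕ}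
    (hm : f.IsHomogeneous m) (h01 : polarization k (Fin n) 0 1 f = 0)
    (hdiag : polarization k (Fin n) 0 0 f = polarization k (Fin n) 1 1 f) :
    f ∈ bracketAlgebra k n := by
  induction m using Nat.strong_induction_on generalizing f with
  | _ m ih =>
  rcases Nat.eq_zero_or_pos m with rfl | hpos
  · rw [← totalDegree_zero_iff_isHomogeneous, totalDegree_eq_zero_iff_eq_C] at hm
    rw [hm]
    exact Subalgebra.algebraMap_mem _ _
  have hΩ (a b : Fin n) : cayleyOmega k 0 1 a b f ∈ bracketAlgebra k n := by
    refine ih (m - 2) (by omega) (isHomogeneous_cayleyOmega 0 1 a b hm) ?_ ?_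
    · rw [polarization_cayleyOmega zero_ne_one, h01, map_zero]
    · rw [polarization_left_cayleyOmega zero_ne_one, polarization_right_cayleyOmega zero_ne_one,
        hdiag]
  have hunit : IsUnit ((m * (m + 2) : ℕ) : k) := isUnit_natCast_of_ne_zero (by positivity)
  rw [← Subalgebra.mem_toSubmodule, ← Submodule.smul_mem_iff_of_isUnit _ hunit,
    Nat.cast_smul_eq_nsmul, ← two_mul_sum_bracket_mul_cayleyOmega hm h01 hdiag,
    Subalgebra.mem_toSubmodule]
  exact mul_mem (ofNat_mem _ 2) <| sum_mem fun a _ => sum_mem fun b _ =>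
    mul_mem (bracket_mem_bracketAlgebra a b) (hΩ a b)

lemma mem_bracketAlgebra_of_mem_Rv [Algebra ℚ k] {v : Fin n → ℕ} {f : PtRing k n}
    (hf : f ∈ Rv k n v) : f ∈ bracketAlgebra k n := by
  have : IsAddTorsionFree k := .of_module_rat k
  obtain ⟨hinv, hdeg⟩ := mem_Rv.1 hf
  exact mem_bracketAlgebra_of_polarization
    (isHomogeneous_of_isWeightedHomogeneous_pointWeight hdeg)
    (polarization_eq_zero_of_invariant zero_ne_one hinv) (polarization_diag_eq_of_invariant hinv)

end Invariants

theorem stmt3_general (k : Type) [CommRing k] [Algebra ℚ k] (n : ℕ) (v : Fin n → ℕ) :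
    Rv k n v = Submodule.span k
      {f : PtRing k n | ∃ Γ : Multiset (Fin n × Fin n),
        (∀ e ∈ Γ, e.1 ≠ e.2) ∧ valence n Γ = v ∧ f = graphMonomial k n Γ} := by
  refine le_antisymm (fun f hf => ?_) (Submodule.span_le.2 ?_)
  · refine Submodule.span_mono ?_ <|
      mem_span_image_of_isWeightedHomogeneous (fun Γ _ => isWeightedHomogeneous_graphMonomial Γ)
        (mem_Rv.1 hf).2 (toSubmodule_bracketAlgebra_le_span (mem_bracketAlgebra_of_mem_Rv hf))
    rintro _ ⟨Γ, ⟨hloop, hval⟩, rfl⟩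
    exact ⟨Γ, hloop, Finsupp.equivFunOnFinite.symm.injective hval, rfl⟩
  · rintro _ ⟨Γ, _, rfl, rfl⟩
    exact graphMonomial_mem_Rv Γ

/-- In characteristic zero, `R_v` is spanned by the graph monomials `m_Γ` for directed graphs
`Γ` with valence vector `v`. -/
theorem stmt3 (k : Type) [Field k] [CharZero k] (n : ℕ) (v : Fin n → ℕ) :
    Rv k n v = Submodule.span k
      {f : PtRing k n | ∃ Γ : Multiset (Fin n × Fin n),
        (∀ e ∈ Γ, e.1 ≠ e.2) ∧ valence n Γ = v ∧ f = graphMonomial k n Γ} :=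
  stmt3_general k n v
end

section
/- (Linear relations among graph monomials.) Let k be a field of characteristic 0 and v ∈ ℕⁿ. Let V be the free k-vector space with basis vectors e_Γ indexed by the directed graphs Γ on {1,…,n} with valence vector v, and let Φ : V → A be the k-linear map with Φ(e_Γ) = m_Γ. Then the kernel of Φ is spanned by the following elements: (i) sign relations e_Γ + e_{Γ'}, where Γ' is obtained from Γ by reversing the direction of a single edge; and (ii) Plücker relations e_{Γ₀+(a,b)+(c,d)} − e_{Γ₀+(a,c)+(b,d)} + e_{Γ₀+(a,d)+(b,c)}, where Γ₀ is a directed graph on {1,…,n}, a, b, c, d are four distinct vertices, Γ₀+(a,b)+(c,d) denotes the multiset union of Γ₀ with the two indicated directed edges, and the three resulting graphs have valence vector v. -/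
/-!
This is the straightening algorithm for brackets combined with an initial-term argument. Call a
graph *standard* if each edge `(a, b)` has `a < b` and no edge is nested strictly inside another.

Modulo the relations every `e_Γ` is a combination of standard graphs: an edge pointing to its
smaller vertex is reversed, and a nested pair `(a, b)`, `(c, d)` with `a < c < d < b` is replaced
by `(a, d)`, `(c, b)` and `(a, c)`, `(d, b)`. Both moves lower `∑ ((b - a)² + a)`.

On the other hand the monomials of standard graphs are linearly independent: for the lexicographic
order with `x_1 > y_1 > x_2 > y_2 > ⋯` the leading monomial of `m_Γ` is `∏ x_a y_b`. It
records the tails and the heads of `Γ`, and since the edges of a standard graph form a chain in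
the product order, matching the sorted tails with the sorted heads recovers `Γ`.

So the kernel contains the span of the relations and meets the span of the standard graphs
trivially, while these two spans together are everything; by modularity the kernel is the first.
-/

open MvPolynomial

/-- The type of directed graphs on `{1,…,n}` with valence vector `v`. -/
def GraphOf (n : ℕ) (v : Fin n → ℕ) : Type :=
  {Γ : Multiset (Fin n × Fin n) // (∀ e ∈ Γ, e.1 ≠ e.2) ∧ valence n Γ = v}

section Chain

variable {α β : Type*}

theorem exists_pairwise_le_of_isChain [PartialOrder α] {s : Multiset α}
    (hs : IsChain (· ≤ ·) {a | a ∈ s}) :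
    ∃ l : List α, (l : Multiset α) = s ∧ l.Pairwise (· ≤ ·) := by
  classical
  obtain ⟨r, _, hr⟩ := extend_partialOrder ((· ≤ ·) : α → α → Prop)
  refine ⟨s.sort r, s.sort_eq r, (s.pairwise_sort r).imp_of_mem fun ha hb hab => ?_⟩
  rw [Multiset.mem_sort] at ha hb
  exact (hs.total ha hb).elim id fun hba => (antisymm hab (hr _ _ hba)).le

theorem eq_of_isChain_of_map_fst_eq_of_map_snd_eq [PartialOrder α] [PartialOrder β]
    {s t : Multiset (α × β)} (hs : IsChain (· ≤ ·) {p | p ∈ s}) (ht : IsChain (· ≤ ·) {p | p ∈ t})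
    (hfst : s.map Prod.fst = t.map Prod.fst) (hsnd : s.map Prod.snd = t.map Prod.snd) : s = t := by
  obtain ⟨l, rfl, hl⟩ := exists_pairwise_le_of_isChain hs
  obtain ⟨l', rfl, hl'⟩ := exists_pairwise_le_of_isChain ht
  have hfst' : l.map Prod.fst = l'.map Prod.fst :=
    (Multiset.coe_eq_coe.1 hfst).eq_of_pairwise' (r := (· ≤ ·))
      (hl.map _ fun _ _ h => h.1) (hl'.map _ fun _ _ h => h.1)
  have hsnd' : l.map Prod.snd = l'.map Prod.snd :=
    (Multiset.coe_eq_coe.1 hsnd).eq_of_pairwise' (r := (· ≤ ·))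
      (hl.map _ fun _ _ h => h.2) (hl'.map _ fun _ _ h => h.2)
  rw [← List.zip_unzip l, ← List.zip_unzip l', List.unzip_eq_map, List.unzip_eq_map, hfst', hsnd']

theorem exists_fst_lt_and_snd_gt_of_not_isChain [LinearOrder α] [LinearOrder β] {s : Set (α × β)}
    (hs : ¬ IsChain (· ≤ ·) s) : ∃ p ∈ s, ∃ q ∈ s, p.1 < q.1 ∧ q.2 < p.2 := by
  simp only [IsChain, Set.Pairwise, not_forall, not_or, Prod.le_def, not_and_or, not_le] at hs
  grind

end Chain

theorem linearIndependent_of_injective_degree {ι σ R : Type*} [CommRing R] (m : MonomialOrder σ)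
    {f : ι → MvPolynomial σ R} (hf : ∀ i, m.leadingCoeff (f i) ∈ nonZeroDivisors R)
    (hinj : Function.Injective fun i => m.degree (f i)) : LinearIndependent R f := by
  rw [linearIndependent_iff]
  intro l hl
  by_contra hne
  obtain ⟨i, hi, hmax⟩ := l.support.exists_max_image (fun i => m.toSyn (m.degree (f i)))
    (Finsupp.support_nonempty_iff.2 hne)
  have hcoeff : coeff (m.degree (f i)) (Finsupp.linearCombination R f l) =
      l i * m.leadingCoeff (f i) := by
    rw [Finsupp.linearCombination_apply, Finsupp.sum, coeff_sum, Finset.sum_eq_single_of_mem i hi,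
      coeff_smul, smul_eq_mul, MonomialOrder.leadingCoeff]
    intro j hj hji
    have hlt : m.toSyn (m.degree (f j)) < m.toSyn (m.degree (f i)) :=
      (hmax j hj).lt_of_ne fun h => hji (hinj (m.toSyn.injective h))
    rw [coeff_smul, m.coeff_eq_zero_of_lt hlt, smul_zero]
  rw [hl, coeff_zero] at hcoeff
  exact Finsupp.mem_support_iff.1 hi ((mem_nonZeroDivisors_iff_right.1 (hf i)) _ hcoeff.symm)

theorem sup_supported_eq_top_of_rewriting {ι α R : Type*} [Semiring R] [Preorder α]
    [WellFoundedLT α] {N : Submodule R (ι →₀ R)} {S : Set ι} (μ : ι → α)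
    (h : ∀ i ∉ S, Finsupp.single i 1 ∈ N ⊔ Finsupp.supported R R {j | μ j < μ i}) :
    N ⊔ Finsupp.supported R R S = ⊤ := by
  have single_mem (i : ι) : Finsupp.single i 1 ∈ N ⊔ Finsupp.supported R R S := by
    induction i using (InvImage.wf μ wellFounded_lt).induction with
    | _ i ih =>
    by_cases hi : i ∈ S
    · exact Submodule.mem_sup_right (Finsupp.single_mem_supported R 1 hi)
    · refine (sup_le le_sup_left ?_ : N ⊔ Finsupp.supported R R {j | μ j < μ i} ≤ _) (h i hi)
      rw [Finsupp.supported_eq_span_single, Submodule.span_le]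
      rintro _ ⟨j, hj, rfl⟩
      exact ih j hj
  rw [eq_top_iff, ← Finsupp.supported_univ, Finsupp.supported_eq_span_single, Submodule.span_le]
  rintro _ ⟨i, -, rfl⟩
  exact single_mem i

section Graph

variable {n : ℕ} {Γ Δ : Multiset (Fin n × Fin n)}

/-- Standard graphs, whose monomials turn out to be a basis of the span of all graph monomials:
every edge points to its larger vertex, and no two edges are nested. Edges pointing to their
larger vertices are not nested exactly when they are comparable in the product order. -/
structure IsStandard (Γ : Multiset (Fin n × Fin n)) : Prop where
  fst_lt_snd : ∀ e ∈ Γ, e.1 < e.2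
  isChain : IsChain (· ≤ ·) {e | e ∈ Γ}

/-- The exponent of `∏ x_a y_b`, the product being over the edges `(a, b)` of `Γ`. -/
noncomputable def diagonalExponent (Γ : Multiset (Fin n × Fin n)) : Fin n × Fin 2 →₀ ℕ :=
  (Γ.map fun e => Finsupp.single (e.1, 0) 1 + Finsupp.single (e.2, 1) 1).sum

theorem diagonalExponent_cons (e : Fin n × Fin n) (Γ : Multiset (Fin n × Fin n)) :
    diagonalExponent (e ::ₘ Γ) =
      Finsupp.single (e.1, 0) 1 + Finsupp.single (e.2, 1) 1 + diagonalExponent Γ := by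
  simp only [diagonalExponent, Multiset.map_cons, Multiset.sum_cons]

theorem diagonalExponent_apply_zero (Γ : Multiset (Fin n × Fin n)) (i : Fin n) :
    diagonalExponent Γ (i, 0) = (Γ.map Prod.fst).count i := by
  induction Γ using Multiset.induction_on with
  | empty => simp [diagonalExponent]
  | cons e Γ ih =>
    simp [diagonalExponent_cons, ih, Finsupp.single_apply, Multiset.count_cons, add_comm, eq_comm]

theorem diagonalExponent_apply_one (Γ : Multiset (Fin n × Fin n)) (i : Fin n) :
    diagonalExponent Γ (i, 1) = (Γ.map Prod.snd).count i := by
  induction Γ using Multiset.induction_on with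
  | empty => simp [diagonalExponent]
  | cons e Γ ih =>
    simp [diagonalExponent_cons, ih, Finsupp.single_apply, Multiset.count_cons, add_comm, eq_comm]

theorem IsStandard.eq_of_diagonalExponent_eq (hΓ : IsStandard Γ) (hΔ : IsStandard Δ)
    (h : diagonalExponent Γ = diagonalExponent Δ) : Γ = Δ := by
  refine eq_of_isChain_of_map_fst_eq_of_map_snd_eq hΓ.isChain hΔ.isChain ?_ ?_ <;> ext i
  · rw [← diagonalExponent_apply_zero, ← diagonalExponent_apply_zero, h]
  · rw [← diagonalExponent_apply_one, ← diagonalExponent_apply_one, h]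

end Graph

/-- The lexicographic monomial order with `x_1 > y_1 > x_2 > y_2 > ⋯`, for which the diagonal term
`x_a y_b` of the bracket `[ab]`, `a < b`, is the leading one. In Mathlib's lexicographic orders
the smallest index is the largest variable. -/
noncomputable def diagonalOrder (n : ℕ) : MonomialOrder (Fin n × Fin 2) where
  syn := (MonomialOrder.lex (σ := Fin n ×ₗ Fin 2)).syn
  toSyn := (Finsupp.domCongr toLex).trans MonomialOrder.lex.toSyn
  toSyn_monotone := fun _ _ h =>
    MonomialOrder.lex.toSyn_monotone (Finsupp.le_def.2 fun p => h (ofLex p))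

theorem diagonalOrder_antidiagonal_lt_diagonal {n : ℕ} {a b : Fin n} (hab : a < b) :
    (diagonalOrder n).toSyn (Finsupp.single (b, 0) 1 + Finsupp.single (a, 1) 1) <
      (diagonalOrder n).toSyn (Finsupp.single (a, 0) 1 + Finsupp.single (b, 1) 1) := by
  change MonomialOrder.lex.toSyn (Finsupp.domCongr toLex _) <
    MonomialOrder.lex.toSyn (Finsupp.domCongr toLex _)
  rw [MonomialOrder.lex_lt_iff]
  refine Finsupp.Lex.lt_iff.2 ⟨toLex (a, 0), fun p hp => ?_, ?_⟩
  · have hpa : (ofLex p).1 < a := by simpa [Prod.Lex.lt_iff] using hp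
    simp [Prod.ext_iff, hpa.ne', (hpa.trans hab).ne']
  · simp [hab.ne']

section GraphMonomial

variable (k : Type) [CommRing k] {n : ℕ} {Γ : Multiset (Fin n × Fin n)}

theorem bracket_eq_monomial_sub_monomial (a b : Fin n) :
    bracket k n a b = monomial (Finsupp.single (a, 0) 1 + Finsupp.single (b, 1) 1) 1 -
      monomial (Finsupp.single (b, 0) 1 + Finsupp.single (a, 1) 1) 1 := by
  simp only [bracket, X, monomial_mul, mul_one]

theorem graphMonomial_cons (e : Fin n × Fin n) (Γ : Multiset (Fin n × Fin n)) :
    graphMonomial k n (e ::ₘ Γ) = bracket k n e.1 e.2 * graphMonomial k n Γ := by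
  simp only [graphMonomial, Multiset.map_cons, Multiset.prod_cons]

theorem monic_bracket {a b : Fin n} (hab : a < b) :
    (diagonalOrder n).Monic (bracket k n a b) := by
  classical
  nontriviality k
  rw [bracket_eq_monomial_sub_monomial, MonomialOrder.Monic, MonomialOrder.leadingCoeff_sub_of_lt]
  · exact MonomialOrder.leadingCoeff_monomial 1
  · simpa only [MonomialOrder.degree_monomial, one_ne_zero, if_false] using
      diagonalOrder_antidiagonal_lt_diagonal hab

theorem monic_graphMonomial (hΓ : ∀ e ∈ Γ, e.1 < e.2) :
    (diagonalOrder n).Monic (graphMonomial k n Γ) := by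
  induction Γ using Multiset.induction_on with
  | empty => simp [graphMonomial, MonomialOrder.monic_one]
  | cons e Γ ih =>
    rw [Multiset.forall_mem_cons] at hΓ
    rw [graphMonomial_cons]
    exact (monic_bracket k hΓ.1).mul (ih hΓ.2)

theorem degree_bracket [Nontrivial k] {a b : Fin n} (hab : a < b) :
    (diagonalOrder n).degree (bracket k n a b) =
      Finsupp.single (a, 0) 1 + Finsupp.single (b, 1) 1 := by
  classical
  rw [bracket_eq_monomial_sub_monomial, MonomialOrder.degree_sub_of_lt]
  · simp [MonomialOrder.degree_monomial]
  · simpa only [MonomialOrder.degree_monomial, one_ne_zero, if_false] using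
      diagonalOrder_antidiagonal_lt_diagonal hab

theorem degree_graphMonomial [Nontrivial k] (hΓ : ∀ e ∈ Γ, e.1 < e.2) :
    (diagonalOrder n).degree (graphMonomial k n Γ) = diagonalExponent Γ := by
  induction Γ using Multiset.induction_on with
  | empty => simp [graphMonomial, diagonalExponent]
  | cons e Γ ih =>
    rw [Multiset.forall_mem_cons] at hΓ
    have hreg : IsRegular ((diagonalOrder n).leadingCoeff (bracket k n e.1 e.2)) := by
      rw [(monic_bracket k hΓ.1).leadingCoeff_eq_one]
      exact isRegular_one
    rw [graphMonomial_cons, diagonalExponent_cons, MonomialOrder.degree_mul_of_isRegular_left hreg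
      (monic_graphMonomial k hΓ.2).ne_zero, degree_bracket k hΓ.1, ih hΓ.2]

end GraphMonomial

theorem linearIndepOn_graphMonomial (k : Type) [CommRing k] (n : ℕ) (v : Fin n → ℕ) :
    LinearIndepOn k (fun Γ : GraphOf n v => graphMonomial k n Γ.1) {Γ | IsStandard Γ.1} := by
  nontriviality k
  refine linearIndependent_of_injective_degree (diagonalOrder n) (fun Γ => ?_) fun Γ Δ h => ?_
  · rw [(monic_graphMonomial k Γ.2.fst_lt_snd).leadingCoeff_eq_one]
    exact one_mem _
  · dsimp only at h
    rw [degree_graphMonomial k Γ.2.fst_lt_snd, degree_graphMonomial k Δ.2.fst_lt_snd] at h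
    exact Subtype.ext (Subtype.ext (Γ.2.eq_of_diagonalExponent_eq Δ.2 h))

section Relations

/-- The sign relations `e_Γ + e_Γ'`, where `Γ'` is `Γ` with one edge reversed. -/
def signRelations (k : Type) [CommRing k] (n : ℕ) (v : Fin n → ℕ) : Set (GraphOf n v →₀ k) :=
  {w | ∃ (Γ Γ' : GraphOf n v) (Γ₀ : Multiset (Fin n × Fin n)) (a b : Fin n),
    Γ.1 = (a, b) ::ₘ Γ₀ ∧ Γ'.1 = (b, a) ::ₘ Γ₀ ∧
    w = Finsupp.single Γ 1 + Finsupp.single Γ' 1}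

/-- The Plücker relations `e_{Γ₀+(a,b)+(c,d)} − e_{Γ₀+(a,c)+(b,d)} + e_{Γ₀+(a,d)+(b,c)}`. -/
def pluckerRelations (k : Type) [CommRing k] (n : ℕ) (v : Fin n → ℕ) : Set (GraphOf n v →₀ k) :=
  {w | ∃ (Γ₁ Γ₂ Γ₃ : GraphOf n v) (Γ₀ : Multiset (Fin n × Fin n)) (a b c d : Fin n),
    a ≠ b ∧ a ≠ c ∧ a ≠ d ∧ b ≠ c ∧ b ≠ d ∧ c ≠ d ∧
    Γ₁.1 = (a, b) ::ₘ (c, d) ::ₘ Γ₀ ∧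
    Γ₂.1 = (a, c) ::ₘ (b, d) ::ₘ Γ₀ ∧
    Γ₃.1 = (a, d) ::ₘ (b, c) ::ₘ Γ₀ ∧
    w = Finsupp.single Γ₁ 1 - Finsupp.single Γ₂ 1 + Finsupp.single Γ₃ 1}

variable (k : Type) [CommRing k] {n : ℕ} {v : Fin n → ℕ}

theorem span_relations_le_ker :
    Submodule.span k (signRelations k n v ∪ pluckerRelations k n v) ≤
      LinearMap.ker
        (Finsupp.linearCombination k (fun Γ : GraphOf n v => graphMonomial k n Γ.1)) := by
  rw [Submodule.span_le]
  rintro w (⟨Γ, Γ', Γ₀, a, b, h, h', rfl⟩ |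
    ⟨Γ₁, Γ₂, Γ₃, Γ₀, a, b, c, d, -, -, -, -, -, -, h₁, h₂, h₃, rfl⟩)
  · simp only [SetLike.mem_coe, LinearMap.mem_ker, map_add, Finsupp.linearCombination_single,
      one_smul, h, h', graphMonomial_cons, bracket]
    ring
  · simp only [SetLike.mem_coe, LinearMap.mem_ker, map_add, map_sub,
      Finsupp.linearCombination_single, one_smul, h₁, h₂, h₃, graphMonomial_cons, bracket]
    ring

end Relations

section Straightening

variable (k : Type) [CommRing k] {n : ℕ} {v : Fin n → ℕ}

/-- The measure that decreases during straightening: the sum over the edges `(a, b)` of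
`(b - a)² + a`. Unnesting a pair of edges lowers the squared lengths by more than it moves the
tails, and reversing an edge `(a, b)` with `b < a` only moves its tail. -/
def straighteningCost (Γ : Multiset (Fin n × Fin n)) : ℕ :=
  (Γ.map fun e => ((e.2 : ℤ) - e.1).natAbs ^ 2 + (e.1 : ℕ)).sum

theorem straighteningCost_reverse_lt {a b : Fin n} (hba : b < a) (Γ : Multiset (Fin n × Fin n)) :
    straighteningCost ((b, a) ::ₘ Γ) < straighteningCost ((a, b) ::ₘ Γ) := by
  simp only [straighteningCost, Multiset.map_cons, Multiset.sum_cons]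
  rw [Fin.lt_def] at hba
  zify at hba ⊢
  simp only [sq_abs]
  linarith

theorem straighteningCost_unnest_lt {a b c d : Fin n} (hac : a < c) (hcd : c < d) (hdb : d < b)
    (Γ : Multiset (Fin n × Fin n)) :
    straighteningCost ((a, c) ::ₘ (d, b) ::ₘ Γ) < straighteningCost ((a, b) ::ₘ (c, d) ::ₘ Γ) ∧
    straighteningCost ((a, d) ::ₘ (c, b) ::ₘ Γ) < straighteningCost ((a, b) ::ₘ (c, d) ::ₘ Γ) := by
  simp only [straighteningCost, Multiset.map_cons, Multiset.sum_cons]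
  rw [Fin.lt_def] at hac hcd hdb
  zify at hac hcd hdb ⊢
  simp only [sq_abs]
  have hpq := mul_pos (sub_pos.2 hac) (sub_pos.2 hcd)
  have hpr := mul_pos (sub_pos.2 hac) (sub_pos.2 hdb)
  have hqr := mul_pos (sub_pos.2 hcd) (sub_pos.2 hdb)
  have hq : (d - c : ℤ) ≤ (d - c) ^ 2 := Int.le_self_sq _
  constructor <;> linarith [sq_nonneg (d - c : ℤ)]

theorem valence_add (Γ Δ : Multiset (Fin n × Fin n)) :
    valence n (Γ + Δ) = valence n Γ + valence n Δ := by
  ext i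
  simp only [valence, Multiset.map_add, Multiset.count_add, Pi.add_apply]
  ring

theorem GraphOf.exists_replace (Γ : GraphOf n v) {s t Γ₀ : Multiset (Fin n × Fin n)}
    (hΓ : Γ.1 = s + Γ₀) (ht : ∀ e ∈ t, e.1 ≠ e.2) (hst : valence n t = valence n s) :
    ∃ Γ' : GraphOf n v, Γ'.1 = t + Γ₀ := by
  refine ⟨⟨t + Γ₀, fun e he => ?_, ?_⟩, rfl⟩
  · exact (Multiset.mem_add.1 he).elim (ht e) fun he₀ =>
      Γ.2.1 e (hΓ ▸ Multiset.mem_add.2 (Or.inr he₀))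
  · rw [valence_add, hst, ← valence_add, ← hΓ, Γ.2.2]

theorem exists_add_mem_signRelations {Γ : GraphOf n v} {a b : Fin n} (hab : (a, b) ∈ Γ.1)
    (hba : b < a) :
    ∃ Γ' : GraphOf n v, straighteningCost Γ'.1 < straighteningCost Γ.1 ∧
      Finsupp.single Γ 1 + Finsupp.single Γ' 1 ∈ signRelations k n v := by
  obtain ⟨Γ₀, hΓ⟩ := Multiset.exists_cons_of_mem hab
  obtain ⟨Γ', hΓ'⟩ := Γ.exists_replace (s := {(a, b)}) (t := {(b, a)}) hΓ (by simpa using hba.ne)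
    (by
      ext i
      simp only [valence, Multiset.map_singleton]
      ring)
  refine ⟨Γ', ?_, Γ, Γ', Γ₀, a, b, hΓ, hΓ', rfl⟩
  rw [hΓ, hΓ']
  exact straighteningCost_reverse_lt hba Γ₀

theorem exists_sub_add_mem_pluckerRelations {Γ : GraphOf n v} {a b c d : Fin n}
    (hab_mem : (a, b) ∈ Γ.1) (hcd_mem : (c, d) ∈ Γ.1) (hac : a < c) (hcd : c < d) (hdb : d < b) :
    ∃ Γ' Γ'' : GraphOf n v, straighteningCost Γ'.1 < straighteningCost Γ.1 ∧
      straighteningCost Γ''.1 < straighteningCost Γ.1 ∧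
      Finsupp.single Γ' 1 - Finsupp.single Γ'' 1 + Finsupp.single Γ 1 ∈
        pluckerRelations k n v := by
  have had := hac.trans hcd
  have hcb := hcd.trans hdb
  obtain ⟨Γ₀, hΓ⟩ : ∃ Γ₀, Γ.1 = (a, b) ::ₘ (c, d) ::ₘ Γ₀ := by
    obtain ⟨Γ₁, hΓ₁⟩ := Multiset.exists_cons_of_mem hab_mem
    have hcd_mem₁ : (c, d) ∈ Γ₁ := by simpa [hΓ₁, hac.ne'] using hcd_mem
    obtain ⟨Γ₀, rfl⟩ := Multiset.exists_cons_of_mem hcd_mem₁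
    exact ⟨Γ₀, hΓ₁⟩
  have pair_add (e f : Fin n × Fin n) : {e, f} + Γ₀ = e ::ₘ f ::ₘ Γ₀ := by
    rw [Multiset.insert_eq_cons, Multiset.cons_add, Multiset.singleton_add]
  have hΓ_add : Γ.1 = {(a, b), (c, d)} + Γ₀ := hΓ.trans (pair_add _ _).symm
  obtain ⟨Γ', hΓ'⟩ := Γ.exists_replace (t := {(a, c), (d, b)}) hΓ_add
    (by simp [hac.ne, hdb.ne]) (by
      ext i
      simp only [valence, Multiset.insert_eq_cons, Multiset.map_cons, Multiset.map_singleton,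
        Multiset.count_cons, Multiset.count_singleton]
      ring)
  obtain ⟨Γ'', hΓ''⟩ := Γ.exists_replace (t := {(a, d), (c, b)}) hΓ_add
    (by simp [had.ne, hcb.ne]) (by
      ext i
      simp only [valence, Multiset.insert_eq_cons, Multiset.map_cons, Multiset.map_singleton,
        Multiset.count_cons, Multiset.count_singleton]
      ring)
  rw [pair_add] at hΓ' hΓ''
  obtain ⟨hcost', hcost''⟩ := straighteningCost_unnest_lt hac hcd hdb Γ₀
  refine ⟨Γ', Γ'', ?_, ?_, Γ', Γ'', Γ, Γ₀, a, c, d, b, hac.ne, had.ne, (had.trans hdb).ne,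
    hcd.ne, hcb.ne, hdb.ne, hΓ', hΓ'', hΓ, rfl⟩
  · rwa [hΓ, hΓ']
  · rwa [hΓ, hΓ'']

variable (n v) in
theorem span_relations_sup_supported_isStandard_eq_top :
    Submodule.span k (signRelations k n v ∪ pluckerRelations k n v) ⊔
      Finsupp.supported k k {Γ : GraphOf n v | IsStandard Γ.1} = ⊤ := by
  refine sup_supported_eq_top_of_rewriting (fun Γ => straighteningCost Γ.1) fun Γ hΓ => ?_
  by_cases hlt : ∀ e ∈ Γ.1, e.1 < e.2
  · obtain ⟨⟨a, b⟩, hab, ⟨c, d⟩, hcd, hac, hdb⟩ :=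
      exists_fst_lt_and_snd_gt_of_not_isChain fun hchain => hΓ ⟨hlt, hchain⟩
    obtain ⟨Γ', Γ'', hcost', hcost'', hrel⟩ :=
      exists_sub_add_mem_pluckerRelations k hab hcd hac (hlt _ hcd) hdb
    refine Submodule.mem_sup.2 ⟨_, Submodule.subset_span (Or.inr hrel),
      Finsupp.single Γ'' 1 - Finsupp.single Γ' 1, sub_mem ?_ ?_, by abel⟩
    · exact Finsupp.single_mem_supported k 1 hcost''
    · exact Finsupp.single_mem_supported k 1 hcost'
  · simp only [not_forall] at hlt
    obtain ⟨⟨a, b⟩, hab, hba⟩ := hlt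
    obtain ⟨Γ', hcost, hrel⟩ :=
      exists_add_mem_signRelations k hab ((not_lt.1 hba).lt_of_ne (Γ.2.1 _ hab).symm)
    refine Submodule.mem_sup.2 ⟨_, Submodule.subset_span (Or.inl hrel),
      -Finsupp.single Γ' 1, neg_mem ?_, by abel⟩
    exact Finsupp.single_mem_supported k 1 hcost

end Straightening

theorem stmt7_general (k : Type) [CommRing k] (n : ℕ) (v : Fin n → ℕ) :
    LinearMap.ker
      (Finsupp.linearCombination k (fun Γ : GraphOf n v => graphMonomial k n Γ.1)) =
    Submodule.span k (signRelations k n v ∪ pluckerRelations k n v) := by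
  have hdisj := linearIndepOn_iff_disjoint.1 (linearIndepOn_graphMonomial k n v)
  have htop := span_relations_sup_supported_isStandard_eq_top k n v
  exact (eq_of_le_of_inf_le_of_sup_le (span_relations_le_ker k)
    (hdisj.symm.eq_bot.trans_le bot_le) (le_top.trans_eq htop.symm)).symm

/-- The linear relations among graph monomials are spanned by the sign relations and the
Plücker relations. -/
theorem stmt7 (k : Type) [Field k] [CharZero k] (n : ℕ) (v : Fin n → ℕ) :
    LinearMap.ker
      (Finsupp.linearCombination k (fun Γ : GraphOf n v => graphMonomial k n Γ.1)) =
    Submodule.span k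
      ({w : GraphOf n v →₀ k | ∃ (Γ Γ' : GraphOf n v) (Γ₀ : Multiset (Fin n × Fin n))
          (a b : Fin n),
          Γ.1 = (a, b) ::ₘ Γ₀ ∧ Γ'.1 = (b, a) ::ₘ Γ₀ ∧
          w = Finsupp.single Γ 1 + Finsupp.single Γ' 1} ∪
       {w : GraphOf n v →₀ k | ∃ (Γ₁ Γ₂ Γ₃ : GraphOf n v) (Γ₀ : Multiset (Fin n × Fin n))
          (a b c d : Fin n),
          a ≠ b ∧ a ≠ c ∧ a ≠ d ∧ b ≠ c ∧ b ≠ d ∧ c ≠ d ∧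
          Γ₁.1 = (a, b) ::ₘ (c, d) ::ₘ Γ₀ ∧
          Γ₂.1 = (a, c) ::ₘ (b, d) ::ₘ Γ₀ ∧
          Γ₃.1 = (a, d) ::ₘ (b, c) ::ₘ Γ₀ ∧
          w = Finsupp.single Γ₁ 1 - Finsupp.single Γ₂ 1 + Finsupp.single Γ₃ 1}) :=
  stmt7_general k n v
end
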